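/- Let w be a non-increasing positive function on I=(0,a), 0<a≤∞, let v:I→[0,∞) be measurable with decreasing rearrangement v* = w (a.e. on I), and let f be measurable on I with f* finite and integrable on (0,x) for every x∈I (i.e. f ∈ L₁+L∞(I)), and with supp f ⊆ supp v (f = 0 a.e. on {v = 0}). Then, with the convention that f/v = 0 off supp f, the function f*/w rearranged with respect to the measure w·dm is submajorized by f/v rearranged with respect to v·dm: for every x ∈ (0, ∫_I w dm), ∫₀ˣ (f*/w)^{*,w} dm ≤ ∫₀ˣ (f/v)^{*,v} dm. -/

import Mathlib

open MeasureTheory Set Filter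
open scoped ENNReal

/-- The interval `(0, a)` for `a : ℝ≥0∞` (equals `(0,∞)` when `a = ∞`). -/
def Iset (a : ℝ≥0∞) : Set ℝ := {x : ℝ | 0 < x ∧ ENNReal.ofReal x < a}

/-- Lebesgue measure restricted to the interval `(0,a)`. -/
noncomputable def volI (a : ℝ≥0∞) : Measure ℝ := volume.restrict (Iset a)

/-- Decreasing rearrangement of an `ℝ≥0∞`-valued function with respect to a measure `μ`:
`f^{*,μ}(t) = inf {s > 0 : μ({f > s}) ≤ t}`. -/
noncomputable def rearrE (μ : Measure ℝ) (f : ℝ → ℝ≥0∞) (t : ℝ) : ℝ≥0∞ :=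
  sInf {s : ℝ≥0∞ | 0 < s ∧ μ {x | s < f x} ≤ ENNReal.ofReal t}

/-- Decreasing rearrangement of a real function with respect to a measure `μ` on `ℝ`:
`f^{*,μ}(t) = inf {s > 0 : μ({|f| > s}) ≤ t}`. -/
noncomputable def rearr (μ : Measure ℝ) (f : ℝ → ℝ) (t : ℝ) : ℝ≥0∞ :=
  rearrE μ (fun x => ENNReal.ofReal |f x|) t

/-- The measure `w·dm` on the set `I`. -/
noncomputable def wMeas (I : Set ℝ) (w : ℝ → ℝ) : Measure ℝ :=
  (volume.restrict I).withDensity (fun t => ENNReal.ofReal (w t))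

/-- `W(t) = ∫₀ᵗ w dm`. -/
noncomputable def Wfun (w : ℝ → ℝ) (t : ℝ) : ℝ := ∫ s in Set.Ioo (0:ℝ) t, w s

/-- `b = ∫_I w dm` as an extended real number. -/
noncomputable def bval (a : ℝ≥0∞) (w : ℝ → ℝ) : ℝ≥0∞ := ∫⁻ x in Iset a, ENNReal.ofReal (w x)

lemma aux_vol (A B : ℝ≥0∞) :
    volume {s : ℝ | 0 ≤ s ∧ B ≤ ENNReal.ofReal s ∧ ENNReal.ofReal s < A} = A - B := by
  induction B using ENNReal.recTopCoe with
  | top => simp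
  | coe b =>
    induction A using ENNReal.recTopCoe with
    | top =>
      have : {s : ℝ | 0 ≤ s ∧ (b : ℝ≥0∞) ≤ ENNReal.ofReal s ∧ ENNReal.ofReal s < ∞}
          = Ici (b : ℝ) := by
        ext s
        simp only [mem_ofPred_eq, ENNReal.ofReal_lt_top, and_true, mem_Ici]
        constructor
        · rintro ⟨h0, h⟩
          rw [← ENNReal.ofReal_coe_nnreal] at h
          exact (ENNReal.ofReal_le_ofReal_iff h0).1 h
        · intro h
          refine ⟨b.2.trans h, ?_⟩
          rw [← ENNReal.ofReal_coe_nnreal]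
          exact ENNReal.ofReal_le_ofReal h
      rw [this]; simp
    | coe c =>
      have : {s : ℝ | 0 ≤ s ∧ (b : ℝ≥0∞) ≤ ENNReal.ofReal s ∧ ENNReal.ofReal s < c}
          = Ico (b : ℝ) c := by
        ext s
        simp only [mem_ofPred_eq, mem_Ico]
        rw [← ENNReal.ofReal_coe_nnreal, ← ENNReal.ofReal_coe_nnreal]
        constructor
        · rintro ⟨h0, h, h'⟩
          exact ⟨(ENNReal.ofReal_le_ofReal_iff h0).1 h, (ENNReal.ofReal_lt_ofReal_iff_of_nonneg h0).1 h'⟩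
        · rintro ⟨h, h'⟩
          have h0 : 0 ≤ s := b.2.trans h
          exact ⟨h0, ENNReal.ofReal_le_ofReal h, (ENNReal.ofReal_lt_ofReal_iff_of_nonneg h0).2 h'⟩
      rw [this, Real.volume_Ico, ENNReal.ofReal_sub _ (NNReal.coe_nonneg b)]
      simp

lemma aux_layer (μ : Measure ℝ) [SFinite μ] (A B : ℝ → ℝ≥0∞) (hA : Measurable A)
    (hB : Measurable B) :
    ∫⁻ x, (A x - B x) ∂μ =
      ∫⁻ s in Ici (0:ℝ), μ {x | B x ≤ ENNReal.ofReal s ∧ ENNReal.ofReal s < A x} := by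
  have hS : MeasurableSet {p : ℝ × ℝ | B p.1 ≤ ENNReal.ofReal p.2 ∧ ENNReal.ofReal p.2 < A p.1} := by
    apply MeasurableSet.inter
    · exact measurableSet_le (hB.comp measurable_fst) (measurable_snd.ennreal_ofReal)
    · exact measurableSet_lt (measurable_snd.ennreal_ofReal) (hA.comp measurable_fst)
  have h1 := Measure.prod_apply (μ := μ) (ν := volume.restrict (Ici (0:ℝ))) hS
  have h2 := Measure.prod_apply_symm (μ := μ) (ν := volume.restrict (Ici (0:ℝ))) hS
  have h3 := h1.symm.trans h2
  rw [show (∫⁻ s in Ici (0:ℝ), μ {x | B x ≤ ENNReal.ofReal s ∧ ENNReal.ofReal s < A x}) = _ from h3.symm]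
  refine lintegral_congr fun x => ?_
  rw [← aux_vol, Measure.restrict_apply (measurable_prodMk_left hS)]
  congr 1
  ext s
  simp only [mem_ofPred_eq, mem_inter_iff, mem_preimage, mem_Ici]
  tauto

lemma lt_rearrE (μ : Measure ℝ) (f : ℝ → ℝ≥0∞) (t : ℝ) (s : ℝ≥0∞) (hs : s ≠ ∞) :
    s < rearrE μ f t ↔ ENNReal.ofReal t < μ {x | s < f x} := by
  constructor
  · intro h
    by_contra! hc
    refine absurd h (not_lt.2 ?_)
    refine le_of_forall_gt_imp_ge_of_dense fun r hr => ?_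
    exact sInf_le ⟨(zero_le : 0 ≤ s).trans_lt hr,
      (measure_mono fun x (hx : r < f x) => hr.trans hx).trans hc⟩
  · intro h
    obtain ⟨u, hu, hu2, hu3⟩ := exists_seq_strictAnti_tendsto' (x := s) (y := ∞) (lt_top_iff_ne_top.2 hs)
    have hU : {x | s < f x} = ⋃ n, {x | u n < f x} := by
      ext x
      simp only [mem_ofPred_eq, mem_iUnion]
      constructor
      · intro hx
        exact ((hu3.eventually (gt_mem_nhds hx))).exists
      · rintro ⟨n, hn⟩
        exact (hu2 n).1.trans hn
    rw [hU, Monotone.measure_iUnion] at h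
    · obtain ⟨n, hn⟩ := lt_iSup_iff.1 h
      refine (hu2 n).1.trans_le (le_sInf ?_)
      rintro r ⟨_, hr⟩
      by_contra! hc
      exact absurd (hn.trans_le (measure_mono fun x (hx : u n < f x) => hc.trans hx)) (not_lt.2 hr)
    · intro m n hmn x (hx : u m < f x)
      exact (hu.antitone hmn).trans_lt hx

lemma lt_mul_rearrE (μ : Measure ℝ) (f : ℝ → ℝ≥0∞) (t : ℝ) (s : ℝ≥0∞) (hs : s ≠ ∞)
    (l : ℝ≥0∞) (hl : l ≠ ∞) :
    s < l * rearrE μ f t ↔ ENNReal.ofReal t < μ {x | s < l * f x} := by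
  by_cases h0 : l = 0
  · simp [h0]
  · have key : ∀ b : ℝ≥0∞, s < l * b ↔ s / l < b := fun b => by
      rw [ENNReal.div_lt_iff (Or.inl h0) (Or.inl hl), mul_comm]
    simp only [key]
    exact lt_rearrE μ f t _ (ENNReal.div_ne_top hs h0)

lemma rearrE_anti (μ : Measure ℝ) (f : ℝ → ℝ≥0∞) : Antitone (rearrE μ f) := by
  intro s t hst
  exact sInf_le_sInf fun r hr => ⟨hr.1, hr.2.trans (ENNReal.ofReal_le_ofReal hst)⟩

lemma rearrE_meas (μ : Measure ℝ) (f : ℝ → ℝ≥0∞) : Measurable (rearrE μ f) :=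
  (rearrE_anti μ f).measurable

lemma key_ineq (a : ℝ≥0∞) (f g : ℝ → ℝ≥0∞) (hf : Measurable f) (hg : Measurable g)
    (l : ℝ≥0∞) (hl : l ≠ ∞) :
    ∫⁻ t, (rearrE (volI a) f t - l * rearrE (volI a) g t) ∂(volI a)
      ≤ ∫⁻ x, (f x - l * g x) ∂(volI a) := by
  have : SFinite (volI a) := by unfold volI; infer_instance
  have mI : MeasurableSet (Iset a) :=
    measurableSet_Ioi.inter (measurableSet_lt ENNReal.measurable_ofReal measurable_const)
  rw [aux_layer _ _ _ (rearrE_meas _ _) ((rearrE_meas _ _).const_mul l),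
    aux_layer _ _ _ hf (hg.const_mul l)]
  refine lintegral_mono fun s => ?_
  have e1 : {t | l * rearrE (volI a) g t ≤ ENNReal.ofReal s ∧ ENNReal.ofReal s < rearrE (volI a) f t}
      = {t | volI a {x | ENNReal.ofReal s < l * g x} ≤ ENNReal.ofReal t ∧
          ENNReal.ofReal t < volI a {x | ENNReal.ofReal s < f x}} := by
    ext t
    simp only [mem_ofPred_eq]
    rw [← not_lt, lt_mul_rearrE _ _ _ _ ENNReal.ofReal_ne_top _ hl,
      lt_rearrE _ _ _ _ ENNReal.ofReal_ne_top, not_lt]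
  rw [e1]
  calc _ ≤ volI a {x | ENNReal.ofReal s < f x} - volI a {x | ENNReal.ofReal s < l * g x} := by
        rw [← aux_vol]
        conv_lhs => rw [volI]
        rw [Measure.restrict_apply' mI]
        exact measure_mono fun t ht => ⟨ht.2.1.le, ht.1⟩
    _ ≤ volI a ({x | ENNReal.ofReal s < f x} \ {x | ENNReal.ofReal s < l * g x}) := le_measure_sdiff
    _ ≤ _ := by
        refine measure_mono fun x hx => ?_
        exact ⟨not_lt.1 hx.2, hx.1⟩

lemma rearr_excess (μ : Measure ℝ) [SFinite μ] (F : ℝ → ℝ≥0∞) (hF : Measurable F) (l : ℝ≥0∞) :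
    ∫⁻ t in Ici (0:ℝ), (rearrE μ F t - l) = ∫⁻ x, (F x - l) ∂μ := by
  rw [aux_layer _ _ _ (rearrE_meas _ _) measurable_const, aux_layer _ _ _ hF measurable_const]
  refine lintegral_congr fun s => ?_
  by_cases h : l ≤ ENNReal.ofReal s
  · simp only [h, true_and, lt_rearrE _ _ _ _ ENNReal.ofReal_ne_top]
    rw [Measure.restrict_apply' measurableSet_Ici]
    have := aux_vol (μ {x | ENNReal.ofReal s < F x}) 0
    rw [tsub_zero] at this
    refine Eq.trans ?_ this
    congr 1
    ext t
    simp [and_comm]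
  · simp [h]

lemma Ioo_eq (x : ℝ) (h : ℝ → ℝ≥0∞) : ∫⁻ t in Ioo 0 x, h t = ∫⁻ t in Ico 0 x, h t :=
  setLIntegral_congr Ioo_ae_eq_Ico

lemma upper (μ : Measure ℝ) [SFinite μ] (F : ℝ → ℝ≥0∞) (hF : Measurable F) (l : ℝ≥0∞) (x : ℝ) :
    ∫⁻ t in Ioo 0 x, rearrE μ F t ≤ l * ENNReal.ofReal x + ∫⁻ y, (F y - l) ∂μ := by
  rw [← rearr_excess μ F hF]
  calc _ ≤ ∫⁻ t in Ioo 0 x, (l + (rearrE μ F t - l)) := lintegral_mono fun t => le_add_tsub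
    _ = l * ENNReal.ofReal x + ∫⁻ t in Ioo 0 x, (rearrE μ F t - l) := by
        rw [lintegral_add_left measurable_const]; simp
    _ ≤ _ := by
        gcongr
        exact fun t ht => ht.1.le

lemma lower (μ : Measure ℝ) [SFinite μ] (F : ℝ → ℝ≥0∞) (hF : Measurable F) (x : ℝ) :
    rearrE μ F x * ENNReal.ofReal x + ∫⁻ y, (F y - rearrE μ F x) ∂μ
      ≤ ∫⁻ t in Ioo 0 x, rearrE μ F t := by
  rw [← rearr_excess μ F hF]
  set l := rearrE μ F x with hl
  have : ∫⁻ t in Ici (0:ℝ), (rearrE μ F t - l) ≤ ∫⁻ t in Ioo 0 x, (rearrE μ F t - l) := by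
    rw [Ioo_eq, ← lintegral_indicator measurableSet_Ici, ← lintegral_indicator measurableSet_Ico]
    refine lintegral_mono fun t => ?_
    by_cases h0 : 0 ≤ t
    · by_cases hx : t < x
      · simp [h0, hx]
      · have : rearrE μ F t - l = 0 := tsub_eq_zero_of_le (rearrE_anti μ F (not_lt.1 hx))
        simp [h0, this]
    · simp [h0]
  calc _ ≤ l * ENNReal.ofReal x + ∫⁻ t in Ioo 0 x, (rearrE μ F t - l) := by gcongr
    _ = ∫⁻ t in Ioo 0 x, (l + (rearrE μ F t - l)) := by
        rw [lintegral_add_left measurable_const]; simp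
    _ = _ := setLIntegral_congr_fun measurableSet_Ioo fun t ht =>
        add_tsub_cancel_of_le (rearrE_anti μ F ht.2.le)

/-- Theorem H-L: Let `w` be a non-increasing positive weight on `I=(0,a)`,
`v ≥ 0` measurable with `v* = w` a.e., and `f ∈ L₁+L∞(I)` with `supp f ⊆ supp v`. Then
`(f*/w)^{*,w} ≺ (f/v)^{*,v}` on `(0, ∫_I w dm)` (with the convention `f/v = 0` off `supp f`). -/
theorem stmt_5 (a : ℝ≥0∞) (ha : 0 < a) (w v f : ℝ → ℝ)
    (hw_pos : ∀ x ∈ Iset a, 0 < w x) (hw_anti : AntitoneOn w (Iset a)) (hw_meas : Measurable w)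
    (hv_meas : Measurable v) (hv_nonneg : ∀ x ∈ Iset a, 0 ≤ v x)
    (hv_star : ∀ᵐ t ∂(volI a), rearr (volI a) v t = ENNReal.ofReal (w t))
    (hf_meas : Measurable f)
    (hf_fin : ∀ t ∈ Iset a, rearr (volI a) f t ≠ ∞)
    (hf_loc : ∀ x ∈ Iset a, ∫⁻ t in Set.Ioo 0 x, rearr (volI a) f t ≠ ∞)
    (hsupp : ∀ᵐ x ∂(volI a), v x = 0 → f x = 0) :
    ∀ x : ℝ, 0 < x → ENNReal.ofReal x < bval a w →
      ∫⁻ t in Set.Ioo 0 x,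
          rearrE (wMeas (Iset a) w) (fun s => rearr (volI a) f s / ENNReal.ofReal (w s)) t
        ≤ ∫⁻ t in Set.Ioo 0 x, rearr (wMeas (Iset a) v) (fun y => f y / v y) t := by
  intro x hx _
  have mI : MeasurableSet (Iset a) :=
    measurableSet_Ioi.inter (measurableSet_lt ENNReal.measurable_ofReal measurable_const)
  have h1 : SFinite (wMeas (Iset a) w) := by unfold wMeas; infer_instance
  have h2 : SFinite (wMeas (Iset a) v) := by unfold wMeas; infer_instance
  have mF : Measurable (fun s => rearr (volI a) f s / ENNReal.ofReal (w s)) :=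
    (rearrE_meas _ _).div hw_meas.ennreal_ofReal
  have mG : Measurable (fun y => ENNReal.ofReal |f y / v y|) :=
    ((hf_meas.div hv_meas).abs).ennreal_ofReal
  have low := lower (wMeas (Iset a) v) _ mG x
  set l := rearrE (wMeas (Iset a) v) (fun y => ENNReal.ofReal |f y / v y|) x with hl
  have hG : ∫⁻ t in Set.Ioo 0 x, rearr (wMeas (Iset a) v) (fun y => f y / v y) t
      = ∫⁻ t in Set.Ioo 0 x, rearrE (wMeas (Iset a) v) (fun y => ENNReal.ofReal |f y / v y|) t := rfl
  rw [hG]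
  by_cases hlt : l = ∞
  · have hx' : ENNReal.ofReal x ≠ 0 := by simpa using hx
    rw [hlt, ENNReal.top_mul hx', top_add, top_le_iff] at low
    rw [low]; exact le_top
  refine (upper (wMeas (Iset a) w) _ mF l x).trans (le_trans ?_ low)
  gcongr 1 with s
  have hmem : ∀ᵐ t ∂(volI a), t ∈ Iset a := ae_restrict_mem mI
  have eL : ∫⁻ y, (rearr (volI a) f y / ENNReal.ofReal (w y) - l) ∂(wMeas (Iset a) w)
      = ∫⁻ t, (rearrE (volI a) (fun x => ENNReal.ofReal |f x|) t
          - l * rearrE (volI a) (fun x => ENNReal.ofReal |v x|) t) ∂(volI a) := by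
    rw [wMeas, lintegral_withDensity_eq_lintegral_mul _ hw_meas.ennreal_ofReal
      (show Measurable (fun y => rearr (volI a) f y / ENNReal.ofReal (w y) - l) from mF.sub measurable_const)]
    refine lintegral_congr_ae ?_
    filter_upwards [hv_star, hmem] with t ht hI
    have hw0 : ENNReal.ofReal (w t) ≠ 0 := by simpa using hw_pos t hI
    change rearrE (volI a) (fun x => ENNReal.ofReal |v x|) t = _ at ht
    rw [ht]
    simp only [Pi.mul_apply]
    rw [ENNReal.mul_sub (fun _ _ => ENNReal.ofReal_ne_top),
      ENNReal.mul_div_cancel hw0 ENNReal.ofReal_ne_top, mul_comm l]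
    rfl
  have eR : ∫⁻ y, (ENNReal.ofReal |f y / v y| - l) ∂(wMeas (Iset a) v)
      = ∫⁻ t, (ENNReal.ofReal |f t| - l * ENNReal.ofReal |v t|) ∂(volI a) := by
    rw [wMeas, lintegral_withDensity_eq_lintegral_mul _ hv_meas.ennreal_ofReal
      (show Measurable (fun y => ENNReal.ofReal |f y / v y| - l) from mG.sub measurable_const)]
    refine lintegral_congr_ae ?_
    filter_upwards [hsupp, hmem] with t ht hI
    have hv0 := hv_nonneg t hI
    simp only [Pi.mul_apply]
    by_cases hz : v t = 0
    · simp [hz, ht hz]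
    · rw [ENNReal.mul_sub (fun _ _ => ENNReal.ofReal_ne_top), ← ENNReal.ofReal_mul hv0,
        abs_div, abs_of_nonneg hv0, mul_div_cancel₀ _ hz, mul_comm l]
  rw [eL, eR]
  exact key_ineq a _ _ hf_meas.abs.ennreal_ofReal hv_meas.abs.ennreal_ofReal l hlt
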